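/- Let E and F be real inner product spaces, let n ≥ 1, let e : Fin n → E be an orthonormal family, let M ≥ 0, and let A, B : E → F be continuous linear maps with operator norms ‖A‖ ≤ M and ‖B‖ ≤ M. Then √(det (⟪A (e i), A (e j)⟫)_{i,j}) ≤ √(det (⟪B (e i), B (e j)⟫)_{i,j}) + n · M^{n−1} · ‖A − B‖. -/

import Mathlib

/-!
Write `g v = √(det (⟪v i, v j⟫))`. With all entries but the `i`-th fixed, `g` is a nonnegative
multiple of `x ↦ ‖P x‖`, where `P` is the orthogonal projection onto the complement of the span of
the other entries, and the multiple is `g` of the family with the `i`-th entry removed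
(`gram_det_update`). This gives the triangle inequality for `g` in each slot
(`sqrt_gram_det_update_le`) and, by induction on the number of vectors, Hadamard's inequality
`g v ≤ ∏ i, ‖v i‖` (`sqrt_gram_det_le_prod`). Replacing the vectors `B (e i)` by `A (e i)` one at a
time, each replacement raises `g` by at most the `g` of a family with one entry
`(A - B) (e i)` and all others of norm at most `M`, that is by at most `M ^ (n - 1) * ‖A - B‖`.
-/

open RealInnerProductSpace

section

variable {F : Type*} [NormedAddCommGroup F] [InnerProductSpace ℝ F]

/-- For fixed `u`, the determinant `det ⟪v j, u k⟫` as an alternating map in `v`. -/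
noncomputable def mixedGramDet {n : ℕ} (u : Fin n → F) : F [⋀^Fin n]→ₗ[ℝ] ℝ :=
  Matrix.detRowAlternating.compLinearMap (LinearMap.pi fun k => innerₗ F (u k))

lemma mixedGramDet_apply {n : ℕ} (u v : Fin n → F) :
    mixedGramDet u v = Matrix.det (Matrix.of fun j k => ⟪v j, u k⟫) := by
  simp only [mixedGramDet, AlternatingMap.compLinearMap_apply]
  change Matrix.det _ = _
  congr 1
  ext j k
  simp [real_inner_comm]

lemma mixedGramDet_comm {n : ℕ} (u v : Fin n → F) : mixedGramDet u v = mixedGramDet v u := by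
  rw [mixedGramDet_apply, mixedGramDet_apply, ← Matrix.det_transpose]
  congr 1
  ext j k
  simp [real_inner_comm]

/-- The span of all entries of `v` except the `i`-th. -/
def faceSpan {n : ℕ} (v : Fin (n + 1) → F) (i : Fin (n + 1)) : Submodule ℝ F :=
  Submodule.span ℝ (Set.range (v ∘ i.succAbove))

instance {n : ℕ} (v : Fin (n + 1) → F) (i : Fin (n + 1)) : FiniteDimensional ℝ (faceSpan v i) :=
  FiniteDimensional.span_of_finite ℝ (Set.finite_range _)

lemma mixedGramDet_update_of_mem_span {n : ℕ} (u v : Fin (n + 1) → F) (i : Fin (n + 1)) {q : F}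
    (hq : q ∈ faceSpan v i) :
    mixedGramDet u (Function.update v i q) = 0 := by
  unfold faceSpan at hq
  induction hq using Submodule.span_induction with
  | mem x hx =>
    obtain ⟨k, rfl⟩ := hx
    exact (mixedGramDet u).map_update_self v (Fin.succAbove_ne i k).symm
  | zero => exact (mixedGramDet u).map_update_zero v i
  | add x y _ _ hx hy => rw [(mixedGramDet u).map_update_add, hx, hy, add_zero]
  | smul a x _ hx => rw [(mixedGramDet u).map_update_smul, hx, smul_zero]

/-- Base times squared height: the squared volume of a parallelepiped is the squared volume of the
face omitting the `i`-th edge times the squared distance of that edge from the face. -/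
lemma gram_det_update {n : ℕ} (v : Fin (n + 1) → F) (i : Fin (n + 1)) (x : F) :
    mixedGramDet (Function.update v i x) (Function.update v i x) =
      ‖(faceSpan v i)ᗮ.starProjection x‖ ^ 2 *
        mixedGramDet (v ∘ i.succAbove) (v ∘ i.succAbove) := by
  set S := faceSpan v i with hS
  set w := Sᗮ.starProjection x with hw
  have hwS : w ∈ Sᗮ := Submodule.starProjection_apply_mem _ _
  have hx : x = S.starProjection x + w :=
    (S.starProjection_add_starProjection_orthogonal x).symm
  have hq : S.starProjection x ∈ S := Submodule.starProjection_apply_mem _ _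
  -- Each of the two arguments is changed from `x` to `w` by alternation.
  have hred (u : Fin (n + 1) → F) :
      mixedGramDet u (Function.update v i x) = mixedGramDet u (Function.update v i w) := by
    conv_lhs => rw [hx]
    rw [(mixedGramDet u).map_update_add, mixedGramDet_update_of_mem_span u v i hq, zero_add]
  rw [hred, mixedGramDet_comm, hred, mixedGramDet_apply, mixedGramDet_apply,
    Matrix.det_succ_row _ i, Finset.sum_eq_single i]
  · have hsub : (Matrix.of fun j k =>
        ⟪Function.update v i w j, Function.update v i w k⟫).submatrix i.succAbove i.succAbove =
        Matrix.of fun j k => ⟪(v ∘ i.succAbove) j, (v ∘ i.succAbove) k⟫ := by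
      ext j k
      simp [Fin.succAbove_ne]
    rw [hsub]
    simp [← two_mul]
  · intro k _ hk
    obtain ⟨l, rfl⟩ := Fin.exists_succAbove_eq hk
    have h0 : ⟪w, v (i.succAbove l)⟫ = 0 :=
      Submodule.inner_left_of_mem_orthogonal (K := S) (Submodule.subset_span ⟨l, rfl⟩) hwS
    simp [Fin.succAbove_ne, h0]
  · simp

lemma sqrt_gram_det_update {n : ℕ} (v : Fin (n + 1) → F) (i : Fin (n + 1)) (x : F) :
    √(mixedGramDet (Function.update v i x) (Function.update v i x)) =
      ‖(faceSpan v i)ᗮ.starProjection x‖ *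
        √(mixedGramDet (v ∘ i.succAbove) (v ∘ i.succAbove)) := by
  rw [gram_det_update, Real.sqrt_mul (sq_nonneg _), Real.sqrt_sq (norm_nonneg _)]

lemma sqrt_gram_det_update_le {n : ℕ} (v : Fin (n + 1) → F) (i : Fin (n + 1)) (x y : F) :
    √(mixedGramDet (Function.update v i x) (Function.update v i x)) ≤
      √(mixedGramDet (Function.update v i y) (Function.update v i y)) +
        √(mixedGramDet (Function.update v i (x - y)) (Function.update v i (x - y))) := by
  simp only [sqrt_gram_det_update, ← add_mul]
  gcongr
  rw [map_sub]
  exact norm_le_insert' _ _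

/-- Hadamard's inequality for Gram determinants. -/
lemma sqrt_gram_det_le_prod {n : ℕ} (v : Fin n → F) : √(mixedGramDet v v) ≤ ∏ i, ‖v i‖ := by
  induction n with
  | zero => simp [mixedGramDet_apply]
  | succ n ih =>
    have h := sqrt_gram_det_update v 0 (v 0)
    rw [Function.update_eq_self] at h
    rw [h, Fin.prod_univ_succAbove _ 0]
    gcongr
    · exact Submodule.norm_starProjection_apply_le _ _
    · exact ih _

end

/-- The map `A ↦ ΛⁿA` is locally Lipschitz on bounded sets: quantitative comparison of
`n`-dimensional Jacobians (square roots of Gram determinants) of two bounded linear maps. -/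
theorem sqrt_gram_det_lipschitz
    {E F : Type*} [NormedAddCommGroup E] [InnerProductSpace ℝ E]
    [NormedAddCommGroup F] [InnerProductSpace ℝ F]
    {n : ℕ} (hn : 1 ≤ n) (e : Fin n → E) (he : Orthonormal ℝ e)
    (M : ℝ) (hM : 0 ≤ M) (A B : E →L[ℝ] F) (hA : ‖A‖ ≤ M) (hB : ‖B‖ ≤ M) :
    Real.sqrt (Matrix.det (Matrix.of fun i j => ⟪A (e i), A (e j)⟫))
      ≤ Real.sqrt (Matrix.det (Matrix.of fun i j => ⟪B (e i), B (e j)⟫))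
        + n * M ^ (n - 1) * ‖A - B‖ := by
  obtain ⟨m, rfl⟩ : ∃ m, n = m + 1 := ⟨n - 1, by omega⟩
  have hle (T : E →L[ℝ] F) (i : Fin (m + 1)) : ‖T (e i)‖ ≤ ‖T‖ := by
    simpa [he.1 i] using T.le_opNorm (e i)
  set a : Fin (m + 1) → F := fun i => A (e i) with ha
  set b : Fin (m + 1) → F := fun i => B (e i) with hb
  -- The family `s.piecewise a b` has the vectors of `A` in the slots `s` and those of `B` elsewhere.
  have key (s : Finset (Fin (m + 1))) :
      √(mixedGramDet (s.piecewise a b) (s.piecewise a b)) ≤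
        √(mixedGramDet b b) + s.card * (M ^ m * ‖A - B‖) := by
    induction s using Finset.induction_on with
    | empty => simp
    | insert i s his ih =>
      set v := s.piecewise a b with hv
      have hvi : Function.update v i (b i) = v := by
        rw [← Finset.piecewise_eq_of_notMem s a b his, Function.update_eq_self]
      have hbound : √(mixedGramDet (Function.update v i (a i - b i))
          (Function.update v i (a i - b i))) ≤ M ^ m * ‖A - B‖ := by
        refine (sqrt_gram_det_le_prod _).trans ?_
        rw [Fin.prod_univ_succAbove _ i, mul_comm]
        gcongr
        · calc _ ≤ ∏ _j : Fin m, M := by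
                refine Finset.prod_le_prod (fun _ _ => norm_nonneg _) fun j _ => ?_
                rw [Function.update_of_ne (Fin.succAbove_ne i j)]
                by_cases hj : i.succAbove j ∈ s
                · rw [hv, Finset.piecewise_eq_of_mem _ _ _ hj]
                  exact (hle A _).trans hA
                · rw [hv, Finset.piecewise_eq_of_notMem _ _ _ hj]
                  exact (hle B _).trans hB
            _ = M ^ m := by simp
        · simpa using hle (A - B) i
      have htri := sqrt_gram_det_update_le v i (a i) (b i)
      rw [hvi] at htri
      rw [Finset.piecewise_insert, Finset.card_insert_of_notMem his]
      push_cast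
      linarith
  have h := key Finset.univ
  rw [Finset.piecewise_univ, mixedGramDet_apply, mixedGramDet_apply] at h
  simpa [mul_assoc] using h
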